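/- Let A be an abelian category of finite global dimension with enough projectives. Then every cochain complex in A with projective components is h-projective, i.e., any chain map from it to an acyclic complex is null-homotopic. -/

import Mathlib

open CategoryTheory CategoryTheory.Limits

namespace Stmt5Aux

open CochainComplex CochainComplex.HomComplex

variable {A : Type u} [Category.{v} A] [Abelian A]

/-- If `Ext^{d+1}` vanishes identically then all objects have projective dimension `< d + 1`. -/
lemma pd_lt [EnoughProjectives A] [HasExt.{w} A] (d : ℕ)
    (hgl : ∀ X Y : A, Subsingleton (Abelian.Ext X Y (d + 1))) (X : A) :
    HasProjectiveDimensionLT X (d + 1) := by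
  have key : ∀ (k : ℕ) (X Y : A) (e : Abelian.Ext X Y (d + 1 + k)), e = 0 := by
    intro k
    induction k with
    | zero => intro X Y e; exact (hgl X Y).elim _ _
    | succ k ih =>
      intro X Y e
      let S : ShortComplex A := ShortComplex.mk (kernel.ι (Projective.π X)) (Projective.π X) (by simp)
      have hS : S.ShortExact := { exact := ShortComplex.exact_kernel (Projective.π X) }
      obtain ⟨x, hx⟩ := Abelian.Ext.contravariant_sequence_exact₃ hS Y (n₁ := d + 1 + (k + 1)) e
        (by
          have : Projective S.X₂ := inferInstanceAs (Projective (Projective.over X))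
          exact Abelian.Ext.eq_zero_of_hasProjectiveDimensionLT _ 1 (by omega))
        (n₀ := d + 1 + k) (by omega)
      rw [← hx, ih _ _ x, Abelian.Ext.comp_zero]
  refine HasProjectiveDimensionLT.mk (fun i hi Y e => ?_)
  obtain ⟨k, rfl⟩ := Nat.exists_eq_add_of_le hi
  exact key k X Y e

/-- Cocycles with values in a contractible complex are coboundaries. -/
lemma cobound_of_contractible {C X : CochainComplex A ℤ} (h : Homotopy (𝟙 X) 0)
    (n m : ℤ) (hmn : m + 1 = n) (z : Cochain C X n) (hz : δ n (n + 1) z = 0) :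
    ∃ y : Cochain C X m, δ m n y = z := by
  refine ⟨z.comp (Cochain.ofHomotopy h) (by omega), ?_⟩
  rw [δ_comp z _ _ (n + 1) 0 n hmn rfl (by omega), hz, δ_ofHomotopy]
  simp

lemma epi_toCycles (X : CochainComplex A ℤ) (hX : ∀ n, X.ExactAt n) (i j : ℤ) (hij : i + 1 = j) :
    Epi (X.toCycles i j) :=
  Preadditive.epi_of_isZero_cokernel' _
    (X.homologyIsCokernel i j (by simp; omega)) ((hX j).isZero_homology)

lemma iCycles_toCycles (X : CochainComplex A ℤ) (i j : ℤ) :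
    X.iCycles i ≫ X.toCycles i j = 0 := by
  rw [← cancel_mono (X.iCycles j)]
  simp

lemma exactAt_of_contractible {X : CochainComplex A ℤ} (h : Homotopy (𝟙 X) 0) (n : ℤ) :
    X.ExactAt n := by
  rw [HomologicalComplex.exactAt_iff_isZero_homology, IsZero.iff_id_eq_zero]
  simpa using h.homologyMap_eq n

lemma projective_cycles_of_contractible {X : CochainComplex A ℤ} (h : Homotopy (𝟙 X) 0)
    (hp : ∀ n, Projective (X.X n)) (n : ℤ) : Projective (X.cycles n) := by
  have hc := Cochain.congr_v (δ_ofHomotopy h) n n (add_zero n)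
  rw [δ_v (-1) 0 (by omega) _ n n (add_zero n) (n - 1) (n + 1) rfl rfl] at hc
  have r : Retract (X.cycles n) (X.X (n - 1)) :=
    { i := X.iCycles n ≫ (Cochain.ofHomotopy h).v n (n - 1) (by omega)
      r := X.toCycles (n - 1) n
      retract := by
        rw [← cancel_mono (X.iCycles n)]
        have := X.iCycles n ≫= hc
        simpa using this }
  have := hp (n - 1)
  rw [projective_iff_hasProjectiveDimensionLT_one]
  exact r.hasProjectiveDimensionLT 1

/-- Every complex is a quotient of a contractible complex of projectives. -/
lemma exists_cover [EnoughProjectives A] (X : CochainComplex A ℤ) :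
    ∃ (P : CochainComplex A ℤ) (p : P ⟶ X), Nonempty (Homotopy (𝟙 P) 0) ∧
      (∀ n, Projective (P.X n)) ∧ (∀ n, Epi (p.f n)) := by
  let Q : CochainComplex A ℤ :=
    { X := fun n => Projective.over (X.X (n - 1))
      d := fun _ _ => 0 }
  let α : Cochain Q X (-1) := Cochain.mk fun p q hpq =>
    Projective.π (X.X (p - 1)) ≫ (X.XIsoOfEq (show p - 1 = q by omega)).hom
  have hα : ∀ p q hpq, Epi (α.v p q hpq) := by
    intro p q hpq
    exact inferInstanceAs (Epi (Projective.π (X.X (p - 1)) ≫ (X.XIsoOfEq (show p - 1 = q by omega)).hom))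
  let β : Q ⟶ X := Cocycle.homOf (Cocycle.mk (δ (-1) 0 α) 1 (by omega) (δ_δ _ _ _ _))
  let p := mappingCone.desc (𝟙 Q) α β (by simp [β])
  refine ⟨mappingCone (𝟙 Q), p, ⟨mappingCone.homotopyToZeroOfId Q⟩, ?_, ?_⟩
  · intro n
    have h1 : ∀ n, Projective (Q.X n) := fun n =>
      inferInstanceAs (Projective (Projective.over (X.X (n - 1))))
    exact Projective.of_iso (HomologicalComplex.homotopyCofiber.XIsoBiprod (𝟙 Q) n (n + 1) rfl).symm
      inferInstance
  · intro n
    have h := mappingCone.inl_v_desc_f (𝟙 Q) α β (by simp [β]) (n + 1) n (by omega)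
    have := hα (n + 1) n (by omega)
    rw [← h] at this
    exact @epi_of_epi _ _ _ _ _ _ (p.f n) this

/-- An acyclic complex with projective cycles is contractible. -/
lemma contractible_of_projective_cycles (X : CochainComplex A ℤ) (hX : ∀ n, X.ExactAt n)
    (hZ : ∀ n, Projective (X.cycles n)) : Nonempty (Homotopy (𝟙 X) 0) := by
  have hepi : ∀ i j, i + 1 = j → Epi (X.toCycles i j) := by
    intro i j hij
    exact epi_toCycles X hX i j hij
  have hσ : ∀ i j, i + 1 = j → ∃ s : X.cycles j ⟶ X.X i, s ≫ X.toCycles i j = 𝟙 _ := by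
    intro i j hij
    have := hepi i j hij
    exact ⟨Projective.factorThru (𝟙 _) (X.toCycles i j), by simp⟩
  choose σ hσ using hσ
  have hr : ∀ i j (hij : i + 1 = j), ∃ r : X.X i ⟶ X.cycles i,
      r ≫ X.iCycles i = 𝟙 _ - X.toCycles i j ≫ σ i j hij := by
    intro i j hij
    refine ⟨X.liftCycles (𝟙 _ - X.toCycles i j ≫ σ i j hij) j (by simpa using hij) ?_, X.liftCycles_i _ _ _ _⟩
    rw [← X.toCycles_i i j, Preadditive.sub_comp, Category.assoc, reassoc_of% (hσ i j hij)]
    simp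
  choose r hr using hr
  have hir : ∀ i j (hij : i + 1 = j), X.iCycles i ≫ r i j hij = 𝟙 _ := by
    intro i j hij
    rw [← cancel_mono (X.iCycles i), Category.assoc, hr]
    simp [Preadditive.comp_sub, reassoc_of% (iCycles_toCycles X i j)]
  refine ⟨(Cochain.equivHomotopy _ _).symm ⟨Cochain.mk fun p q hpq => r p (p + 1) rfl ≫ σ q p (by omega), ?_⟩⟩
  ext p
  rw [Cochain.add_v, δ_v (-1) 0 (by omega) _ p p (add_zero p) (p - 1) (p + 1) rfl rfl]
  simp only [Cochain.mk_v, Category.assoc]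
  rw [← X.toCycles_i (p - 1) p, reassoc_of% (hσ (p - 1) p (by omega)), hr,
    ← X.toCycles_i p (p + 1), Category.assoc, reassoc_of% (hir (p + 1) (p + 1 + 1) rfl)]
  simp

lemma cobound [EnoughProjectives A] (C : CochainComplex A ℤ) (hC : ∀ n, Projective (C.X n))
    (k : ℕ) : ∀ (X : CochainComplex A ℤ), (∀ n, X.ExactAt n) →
      (∀ n, HasProjectiveDimensionLT (X.cycles n) (k + 1)) →
      ∀ (n m : ℤ), m + 1 = n → ∀ (z : Cochain C X n), δ n (n + 1) z = 0 →
        ∃ y : Cochain C X m, δ m n y = z := by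
  induction k with
  | zero =>
    intro X hX hZ n m hmn z hz
    obtain ⟨h⟩ := contractible_of_projective_cycles X hX
      (fun n => projective_iff_hasProjectiveDimensionLT_one.2 (hZ n))
    exact cobound_of_contractible h n m hmn z hz
  | succ k ih =>
    intro X hX hZ n m hmn z hz
    obtain ⟨P, p, ⟨h⟩, hP, hp⟩ := exists_cover X
    have hPe := exactAt_of_contractible h
    have : Epi p := HomologicalComplex.epi_of_epi_f p hp
    let S : ShortComplex (CochainComplex A ℤ) := ShortComplex.mk (kernel.ι p) p (by simp)
    have hS : S.ShortExact := { exact := ShortComplex.exact_kernel p }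
    have hq : QuasiIso S.g := ⟨fun i => (quasiIsoAt_iff_exactAt' S.g i (hX i)).2 (hPe i)⟩
    have hK : ∀ n, (kernel p).ExactAt n := hS.acyclic_X₁ hq
    have hKZ : ∀ n, HasProjectiveDimensionLT ((kernel p).cycles n) (k + 1) := by
      intro i
      have hex := HomologicalComplex.cycles_left_exact S hS.exact i
      have hepi : Epi (HomologicalComplex.cyclesMap p i) := by
        have h1 := epi_toCycles X hX (i - 1) i (by omega)
        have h2 : Epi (P.toCycles (i - 1) i ≫ HomologicalComplex.cyclesMap p i) := by
          have : P.toCycles (i - 1) i ≫ HomologicalComplex.cyclesMap p i =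
              p.f (i - 1) ≫ X.toCycles (i - 1) i := by
            rw [← cancel_mono (X.iCycles i)]
            simp
          rw [this]
          infer_instance
        exact @epi_of_epi _ _ _ _ _ _ _ h2
      have hpr : Projective (P.cycles i) := projective_cycles_of_contractible h hP i
      refine ShortComplex.ShortExact.hasProjectiveDimensionLT_X₁
        (S := ShortComplex.mk (HomologicalComplex.cyclesMap S.f i) (HomologicalComplex.cyclesMap S.g i)
          (by rw [← HomologicalComplex.cyclesMap_comp, S.zero, HomologicalComplex.cyclesMap_zero]))
        { exact := hex, mono_f := by dsimp; infer_instance, epi_g := hepi } (k + 1) ?_ (hZ i)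
      exact inferInstanceAs (HasProjectiveDimensionLT (P.cycles i) (k + 1))
    -- lift the cocycle degreewise
    let g : Cochain C P n := Cochain.mk fun i j hij => Projective.factorThru (z.v i j hij) (p.f j)
    have hg : g.comp (Cochain.ofHom p) (add_zero n) = z := by
      ext i j hij
      simp [g]
    have hδ : (δ n (n + 1) g).comp (Cochain.ofHom p) (add_zero _) = 0 := by
      rw [← δ_comp_ofHom, hg, hz]
    have hex : ∀ j, (S.map (HomologicalComplex.eval A _ j)).ShortExact := fun j =>
      hS.map_of_exact _
    let t : Cochain C (kernel p) (n + 1) := Cochain.mk fun i j hij =>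
      (hex j).fIsKernel.lift (KernelFork.ofι ((δ n (n + 1) g).v i j hij)
        (by
          have := Cochain.congr_v hδ i j hij
          rw [Cochain.comp_zero_cochain_v, Cochain.ofHom_v] at this
          exact this))
    have ht : t.comp (Cochain.ofHom (kernel.ι p)) (add_zero _) = δ n (n + 1) g := by
      ext i j hij
      rw [Cochain.comp_zero_cochain_v, Cochain.ofHom_v]
      exact (hex j).fIsKernel.fac _ WalkingParallelPair.zero
    have hδt : δ (n + 1) (n + 1 + 1) t = 0 := by
      have : (δ (n + 1) (n + 1 + 1) t).comp (Cochain.ofHom (kernel.ι p)) (add_zero _) = 0 := by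
        rw [← δ_comp_ofHom, ht, δ_δ]
      ext i j hij
      have := Cochain.congr_v this i j hij
      rw [← cancel_mono ((kernel.ι p).f j)]
      simpa using this
    obtain ⟨s, hs⟩ := ih (kernel p) hK hKZ (n + 1) n rfl t hδt
    obtain ⟨y, hy⟩ := cobound_of_contractible h n m hmn
      (g - s.comp (Cochain.ofHom (kernel.ι p)) (add_zero _)) (by
        rw [δ_sub, δ_comp_ofHom, hs, ht, sub_self])
    refine ⟨y.comp (Cochain.ofHom p) (add_zero _), ?_⟩
    rw [δ_comp_ofHom, hy, Cochain.sub_comp, hg, Cochain.comp_assoc_of_second_is_zero_cochain,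
      ← Cochain.ofHom_comp, kernel.condition]
    simp

end Stmt5Aux

/-- In an abelian category with enough projectives and finite global
dimension, every cochain complex with projective components is h-projective: every
chain map from it to an acyclic complex is null-homotopic. -/
theorem stmt_5 {A : Type u} [Category.{v} A] [Abelian A] [EnoughProjectives A]
    [HasExt.{w} A] (d : ℕ)
    (hgl : ∀ X Y : A, Subsingleton (Abelian.Ext X Y (d + 1)))
    (C : CochainComplex A ℤ) (hproj : ∀ n, Projective (C.X n)) :
    ∀ (X : CochainComplex A ℤ), (∀ n, X.ExactAt n) →
      ∀ f : C ⟶ X, Nonempty (Homotopy f 0) := by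
  intro X hX f
  obtain ⟨y, hy⟩ := Stmt5Aux.cobound C hproj d X hX (fun n => Stmt5Aux.pd_lt d hgl _) 0 (-1)
    (by omega) (CochainComplex.HomComplex.Cochain.ofHom f) (by simp)
  exact ⟨(CochainComplex.HomComplex.Cochain.equivHomotopy _ _).symm ⟨y, by simp [hy]⟩⟩
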